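/- arXiv:2005.01374 — 2 statements merged into one kernel-verified Lean document; each statement's English description precedes it below -/
import Mathlib

section
/- Let M be a deterministic visibly push-down automaton with Σ_ret ≠ ∅. Then: (i) every word that synchronizes M in the empty stack model also synchronizes M in the same stack model; (ii) for every word w that synchronizes M in the same stack model there exists a word w' ∈ Σ_ret* such that ww' synchronizes M in the empty stack model. Consequently, M has a synchronizing word in the same stack model if and only if M has a synchronizing word in the empty stack model. -/
/-- Letters of a visibly pushdown alphabet: call letters (pushing one stack symbol),
internal letters (leaving the stack unchanged), and return letters (popping). -/
inductive VLetter (C I R : Type) : Type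
  | call : C → VLetter C I R
  | int  : I → VLetter C I R
  | ret  : R → VLetter C I R

/-- A deterministic visibly push-down automaton over state type `Q`, call letters `C`,
internal letters `I`, return letters `R`, and stack alphabet `Γ` (the symbols other than the
bottom symbol `⊥`).  A stack is a `List Γ` of the symbols above `⊥`, top at the head; the
bottom symbol `⊥` is implicit.  A return transition receives `none` when `⊥` is the topmost
symbol (it is read but not popped), and `some γ` when `γ ∈ Γ` is on top (which is popped). -/
structure DVPDA (Q C I R Γ : Type) : Type where
  δc : Q → C → Q × Γ
  δi : Q → I → Q
  δr : Q → R → Option Γ → Q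

namespace DVPDA

variable {Q C I R Γ : Type}

/-- One step of a DVPDA on a configuration `(q, υ)`. -/
def step (M : DVPDA Q C I R Γ) : Q × List Γ → VLetter C I R → Q × List Γ
  | (q, s), .call c => ((M.δc q c).1, (M.δc q c).2 :: s)
  | (q, s), .int i  => (M.δi q i, s)
  | (q, []), .ret ρ => (M.δr q ρ none, [])
  | (q, γ :: s), .ret ρ => (M.δr q ρ (some γ), s)

/-- The run of a DVPDA on a word: `(q, υ) →^w M.run (q, υ) w`. -/
def run (M : DVPDA Q C I R Γ) (cfg : Q × List Γ) (w : List (VLetter C I R)) : Q × List Γ :=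
  w.foldl M.step cfg

/-- `w` synchronizes `M` in the empty stack model: all runs from `(q, ⊥)` end in the same
state with empty stack. -/
def SyncEmpty (M : DVPDA Q C I R Γ) (w : List (VLetter C I R)) : Prop :=
  ∃ qbar : Q, ∀ q : Q, M.run (q, []) w = (qbar, [])

/-- `w` synchronizes `M` in the same stack model: all runs from `(q, ⊥)` end in the same
state with the same stack content. -/
def SyncSame (M : DVPDA Q C I R Γ) (w : List (VLetter C I R)) : Prop :=
  ∃ (qbar : Q) (υ : List Γ), ∀ q : Q, M.run (q, []) w = (qbar, υ)

/-- `w` synchronizes `M` in the arbitrary stack model: all runs from `(q, ⊥)` end in the same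
state, with arbitrary stack contents. -/
def SyncArb (M : DVPDA Q C I R Γ) (w : List (VLetter C I R)) : Prop :=
  ∃ qbar : Q, ∀ q : Q, (M.run (q, []) w).1 = qbar

end DVPDA

/-!
A return letter pops one symbol if there is one and never pushes, whatever the state and the letter.
So once all runs have reached one configuration, any return word at least as long as the common
stack empties it, and determinism keeps the runs together.
-/

namespace DVPDA

variable {Q C I R Γ : Type} {M : DVPDA Q C I R Γ} {w : List (VLetter C I R)}

theorem run_append (M : DVPDA Q C I R Γ) (cfg : Q × List Γ) (u v : List (VLetter C I R)) :
    M.run cfg (u ++ v) = M.run (M.run cfg u) v :=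
  List.foldl_append

theorem step_ret_snd (M : DVPDA Q C I R Γ) (cfg : Q × List Γ) (ρ : R) :
    (M.step cfg (.ret ρ)).2 = cfg.2.tail := by
  obtain ⟨q, _ | ⟨γ, υ⟩⟩ := cfg <;> rfl

theorem run_map_ret_snd (M : DVPDA Q C I R Γ) (cfg : Q × List Γ) (w' : List R) :
    (M.run cfg (w'.map .ret)).2 = cfg.2.drop w'.length := by
  induction w' generalizing cfg with
  | nil => rfl
  | cons ρ w' ih =>
    calc (M.run (M.step cfg (.ret ρ)) (w'.map .ret)).2
        = (M.step cfg (.ret ρ)).2.drop w'.length := ih _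
      _ = cfg.2.drop (w'.length + 1) := by rw [step_ret_snd, List.drop_tail]

theorem SyncEmpty.syncSame (h : M.SyncEmpty w) : M.SyncSame w :=
  let ⟨qbar, hrun⟩ := h
  ⟨qbar, [], hrun⟩

theorem syncEmpty_append_map_ret {qbar : Q} {υ : List Γ}
    (hrun : ∀ q : Q, M.run (q, []) w = (qbar, υ)) {w' : List R} (hlen : υ.length ≤ w'.length) :
    M.SyncEmpty (w ++ w'.map .ret) := by
  have stack_eq_nil : (M.run (qbar, υ) (w'.map .ret)).2 = [] := by
    rw [run_map_ret_snd, List.drop_eq_nil_of_le hlen]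
  refine ⟨(M.run (qbar, υ) (w'.map .ret)).1, fun q => ?_⟩
  rw [run_append, hrun q]
  exact Prod.ext rfl stack_eq_nil

theorem SyncSame.exists_syncEmpty_append_map_ret [Nonempty R] (h : M.SyncSame w) :
    ∃ w' : List R, M.SyncEmpty (w ++ w'.map .ret) := by
  obtain ⟨qbar, υ, hrun⟩ := h
  obtain ⟨ρ⟩ := ‹Nonempty R›
  exact ⟨List.replicate υ.length ρ, syncEmpty_append_map_ret hrun List.length_replicate.ge⟩

end DVPDA

theorem dvpda_ret_syncSame_iff_syncEmpty_general
    {Q C I R Γ : Type} [Nonempty R] (M : DVPDA Q C I R Γ) :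
    (∀ w : List (VLetter C I R), M.SyncEmpty w → M.SyncSame w) ∧
    (∀ w : List (VLetter C I R), M.SyncSame w →
      ∃ w' : List R, M.SyncEmpty (w ++ w'.map VLetter.ret)) ∧
    ((∃ w : List (VLetter C I R), M.SyncSame w) ↔
      (∃ w : List (VLetter C I R), M.SyncEmpty w)) := by
  refine ⟨fun _ h => h.syncSame, fun _ h => h.exists_syncEmpty_append_map_ret, ?_, ?_⟩
  · rintro ⟨w, h⟩
    obtain ⟨w', h'⟩ := h.exists_syncEmpty_append_map_ret
    exact ⟨w ++ w'.map .ret, h'⟩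
  · rintro ⟨w, h⟩
    exact ⟨w, h.syncSame⟩

/-- Let `M` be a DVPDA with `Σ_ret ≠ ∅`. Then (i) every word synchronizing
`M` in the empty stack model also synchronizes `M` in the same stack model; (ii) every word
`w` synchronizing `M` in the same stack model can be extended by a word `w' ∈ Σ_ret*` such
that `w ++ w'` synchronizes `M` in the empty stack model. Consequently, `M` has a
synchronizing word in the same stack model iff it has one in the empty stack model. -/
theorem dvpda_ret_syncSame_iff_syncEmpty
    {Q C I R Γ : Type} [Fintype Q] [Nonempty R] (M : DVPDA Q C I R Γ) :
    (∀ w : List (VLetter C I R), M.SyncEmpty w → M.SyncSame w) ∧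
    (∀ w : List (VLetter C I R), M.SyncSame w →
      ∃ w' : List R, M.SyncEmpty (w ++ w'.map VLetter.ret)) ∧
    ((∃ w : List (VLetter C I R), M.SyncSame w) ↔
      (∃ w : List (VLetter C I R), M.SyncEmpty w)) :=
  dvpda_ret_syncSame_iff_syncEmpty_general M
end

section
/- Let T = (Q, Σ, Γ, δ) be a visibly sequential transducer, and for σ ∈ Σ let Σ_σ = {γ ∈ Γ* : δ(q, σ) = (q', γ) for some q, q' ∈ Q}. Then each Σ_σ either equals {ε} or contains only words of one common positive length, and the DVPDA M_T constructed from T as described in the context is a well-defined deterministic visibly push-down automaton such that a word w trace-synchronizes T if and only if w synchronizes M_T in the same stack model. -/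
/-- One step of a sequential transducer with transition function `δ : Q → A → Q × Γ*`:
the new state is composed and the produced output is appended. -/
def tStep {Q A Γ : Type} (δ : Q → A → Q × List Γ) : Q × List Γ → A → Q × List Γ :=
  fun s a => ((δ s.1 a).1, s.2 ++ (δ s.1 a).2)

/-- The run of a sequential transducer on an input word, from state `q`: the final state
together with the concatenated output word. -/
def tRun {Q A Γ : Type} (δ : Q → A → Q × List Γ) (q : Q) (w : List A) : Q × List Γ :=
  w.foldl (tStep δ) (q, [])

/-- `w` trace-synchronizes the sequential transducer `δ`: from all states the runs on `w`
end in the same state and produce the same output word. -/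
def TraceSync {Q A Γ : Type} (δ : Q → A → Q × List Γ) (w : List A) : Prop :=
  ∀ p q : Q, tRun δ p w = tRun δ q w

/-- The DVPDA `M_T` constructed from a visibly sequential transducer `T = (Q, Σ, Γ, δ)`:
the internal letters are those `σ ∈ Σ` with `Σ_σ = {ε}` (all outputs empty), the call
letters are the remaining ones, there are no return letters, and the stack alphabet
consists of the nonempty output words, each counting as a single stack symbol.  A call
letter `σ` in state `q` moves to the state of `δ(q, σ)` and pushes its (nonempty) output
word as one stack symbol; an internal letter just moves to the state of `δ(q, σ)`. -/
def vstDVPDA {Q A Γ : Type} (δ : Q → A → Q × List Γ) :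
    DVPDA Q {a : A // ¬ ∀ q : Q, (δ q a).2 = []} {a : A // ∀ q : Q, (δ q a).2 = []}
      Empty (List Γ) where
  δc := fun q a => ((δ q a.1).1, (δ q a.1).2)
  δi := fun q a => (δ q a.1).1
  δr := fun _ e _ => e.elim

open Classical in
/-- Rereading a word `w ∈ Σ*` over the visibly partitioned alphabet of `M_T`: each letter
`σ` becomes an internal letter if `Σ_σ = {ε}` and a call letter otherwise. -/
noncomputable def encodeWord {Q A Γ : Type} (δ : Q → A → Q × List Γ) (w : List A) :
    List (VLetter {a : A // ¬ ∀ q : Q, (δ q a).2 = []}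
      {a : A // ∀ q : Q, (δ q a).2 = []} Empty) :=
  w.map (fun a =>
    if h : ∀ q : Q, (δ q a).2 = [] then VLetter.int ⟨a, h⟩ else VLetter.call ⟨a, h⟩)

/-!
Flattening the stack of `M_T`, read from bottom to top, recovers the output of `T`, so equal
configurations of `M_T` give equal traces. Conversely, in a visibly sequential transducer the
lengths of the stacked words depend only on the input word, and a list of words is determined by
its concatenation together with the lengths of its entries.
-/

theorem range_eq_singleton_nil_or_length_eq {ι α : Type*} [Nonempty ι] {f : ι → List α}
    (hf : ∀ i j, (f i).length = (f j).length) :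
    Set.range f = {[]} ∨ ∃ k : ℕ, 0 < k ∧ ∀ γ ∈ Set.range f, γ.length = k := by
  have i₀ : ι := Classical.arbitrary ι
  rcases Nat.eq_zero_or_pos (f i₀).length with length_zero | length_pos
  · left
    have eq_nil : f = fun _ => [] :=
      funext fun i => List.length_eq_zero_iff.mp ((hf i i₀).trans length_zero)
    rw [eq_nil, Set.range_const]
  · exact .inr ⟨_, length_pos, Set.forall_mem_range.mpr fun i => hf i i₀⟩

namespace DVPDA

variable {Q C I R Γ : Type} {β : Type*} (M : DVPDA Q C I R Γ)

theorem syncSame_iff_forall_run_eq [Nonempty Q] {w : List (VLetter C I R)} :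
    M.SyncSame w ↔ ∀ p q : Q, M.run (p, []) w = M.run (q, []) w := by
  constructor
  · rintro ⟨qbar, υ, run_eq⟩ p q
    exact (run_eq p).trans (run_eq q).symm
  · intro run_eq
    obtain ⟨q₀⟩ := ‹Nonempty Q›
    exact ⟨_, _, fun q => run_eq q q₀⟩

variable {M} {f : Γ → β}

theorem map_stack_step_eq (hf : ∀ c p q, f (M.δc p c).2 = f (M.δc q c).2)
    {x y : Q × List Γ} (hxy : x.2.map f = y.2.map f) (a : VLetter C I R) :
    (M.step x a).2.map f = (M.step y a).2.map f := by
  cases a with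
  | call c => simp only [step, List.map_cons, hf c x.1 y.1, hxy]
  | int i => exact hxy
  | ret ρ =>
    have stack_step (z : Q × List Γ) : (M.step z (.ret ρ)).2 = z.2.tail := by
      rcases z with ⟨q, _ | ⟨γ, s⟩⟩ <;> rfl
    rw [stack_step, stack_step, List.map_tail, List.map_tail, hxy]

theorem map_stack_run_eq (hf : ∀ c p q, f (M.δc p c).2 = f (M.δc q c).2)
    {x y : Q × List Γ} (hxy : x.2.map f = y.2.map f) (w : List (VLetter C I R)) :
    (M.run x w).2.map f = (M.run y w).2.map f :=
  List.foldl_rel (r := fun x y : Q × List Γ => x.2.map f = y.2.map f) hxy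
    fun a _ _ _ h => map_stack_step_eq hf h a

end DVPDA

/-- The transducer configuration recorded by a configuration of a DVPDA whose stack symbols are
words: the same state, with the stacked words concatenated from bottom to top. -/
def flattenStack {Q Γ : Type*} (x : Q × List (List Γ)) : Q × List Γ :=
  (x.1, x.2.reverse.flatten)

theorem flattenStack_inj {Q Γ : Type*} {x y : Q × List (List Γ)}
    (hlen : x.2.map List.length = y.2.map List.length) :
    flattenStack x = flattenStack y ↔ x = y := by
  have reverse_hlen : x.2.reverse.map List.length = y.2.reverse.map List.length := by
    rw [List.map_reverse, List.map_reverse, hlen]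
  have flatten_inj : x.2.reverse.flatten = y.2.reverse.flatten ↔ x.2 = y.2 := by
    rw [← List.reverse_inj (xs := x.2), List.eq_iff_flatten_eq, and_iff_left reverse_hlen]
  rw [flattenStack, flattenStack, Prod.mk.injEq, flatten_inj, Prod.ext_iff]

section Transducer

variable {Q A Γ : Type} (δ : Q → A → Q × List Γ)

open Classical in
/-- The letter of the visibly partitioned alphabet of `M_T` corresponding to an input letter of `T`;
`encodeWord` applies it letterwise. -/
noncomputable def encodeLetter (a : A) :
    VLetter {a : A // ¬ ∀ q : Q, (δ q a).2 = []} {a : A // ∀ q : Q, (δ q a).2 = []} Empty :=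
  if h : ∀ q : Q, (δ q a).2 = [] then .int ⟨a, h⟩ else .call ⟨a, h⟩

theorem encodeWord_eq_map (w : List A) : encodeWord δ w = w.map (encodeLetter δ) :=
  rfl

theorem tStep_flattenStack (x : Q × List (List Γ)) (a : A) :
    tStep δ (flattenStack x) a = flattenStack ((vstDVPDA δ).step x (encodeLetter δ a)) := by
  by_cases silent : ∀ q : Q, (δ q a).2 = []
    <;> simp [tStep, flattenStack, encodeLetter, silent, DVPDA.step, vstDVPDA]

theorem tRun_eq_flattenStack_run (q : Q) (w : List A) :
    tRun δ q w = flattenStack ((vstDVPDA δ).run (q, []) (encodeWord δ w)) := by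
  rw [DVPDA.run, encodeWord_eq_map, List.foldl_map]
  exact List.foldl_hom flattenStack (init := (q, [])) (tStep_flattenStack δ)

variable {δ}

theorem tRun_eq_tRun_iff_run_eq_run
    (hvst : ∀ (a : A) (p q : Q), (δ p a).2.length = (δ q a).2.length) (p q : Q) (w : List A) :
    tRun δ p w = tRun δ q w ↔
      (vstDVPDA δ).run (p, []) (encodeWord δ w) = (vstDVPDA δ).run (q, []) (encodeWord δ w) := by
  rw [tRun_eq_flattenStack_run, tRun_eq_flattenStack_run]
  have push_length (c : {a : A // ¬ ∀ q : Q, (δ q a).2 = []}) (p q : Q) :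
      ((vstDVPDA δ).δc p c).2.length = ((vstDVPDA δ).δc q c).2.length := hvst c.1 p q
  exact flattenStack_inj (DVPDA.map_stack_run_eq (x := (p, [])) (y := (q, [])) push_length rfl _)

theorem traceSync_iff_syncSame_encodeWord [Nonempty Q]
    (hvst : ∀ (a : A) (p q : Q), (δ p a).2.length = (δ q a).2.length) (w : List A) :
    TraceSync δ w ↔ (vstDVPDA δ).SyncSame (encodeWord δ w) := by
  rw [DVPDA.syncSame_iff_forall_run_eq]
  exact forall₂_congr fun p q => tRun_eq_tRun_iff_run_eq_run hvst p q w

end Transducer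

theorem vst_traceSync_iff_vstDVPDA_syncSame_general
    {Q A Γ : Type} [Nonempty Q] (δ : Q → A → Q × List Γ)
    (hvst : ∀ (a : A) (p q : Q), (δ p a).2.length = (δ q a).2.length) :
    (∀ a : A, {γ : List Γ | ∃ q : Q, (δ q a).2 = γ} = {[]} ∨
      ∃ k : ℕ, 0 < k ∧ ∀ γ ∈ {γ : List Γ | ∃ q : Q, (δ q a).2 = γ}, γ.length = k) ∧
    (∀ w : List A, TraceSync δ w ↔ (vstDVPDA δ).SyncSame (encodeWord δ w)) :=
  ⟨fun a => range_eq_singleton_nil_or_length_eq (hvst a), traceSync_iff_syncSame_encodeWord hvst⟩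

/-- Let `T = (Q, Σ, Γ, δ)` be a visibly sequential transducer and for
`σ ∈ Σ` let `Σ_σ = {γ ∈ Γ* : δ(q, σ) = (q', γ) for some q, q'}`.  Then each `Σ_σ` either
equals `{ε}` or contains only words of one common positive length, and the DVPDA `M_T`
constructed from `T` satisfies: a word `w` trace-synchronizes `T` iff (the rereading over
the visibly alphabet of) `w` synchronizes `M_T` in the same stack model.  (That `M_T` is a
well-defined DVPDA is witnessed by the definition `vstDVPDA`.) -/
theorem vst_traceSync_iff_vstDVPDA_syncSame
    {Q A Γ : Type} [Fintype Q] [Nonempty Q] (δ : Q → A → Q × List Γ)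
    (hvst : ∀ (a : A) (p q : Q), (δ p a).2.length = (δ q a).2.length) :
    (∀ a : A, {γ : List Γ | ∃ q : Q, (δ q a).2 = γ} = {[]} ∨
      ∃ k : ℕ, 0 < k ∧ ∀ γ ∈ {γ : List Γ | ∃ q : Q, (δ q a).2 = γ}, γ.length = k) ∧
    (∀ w : List A, TraceSync δ w ↔ (vstDVPDA δ).SyncSame (encodeWord δ w)) :=
  vst_traceSync_iff_vstDVPDA_syncSame_general δ hvst
end
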